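/- Write Δ_{1,b} in 2×2-block form [[A, B], [C, X]], where A is the top-left 2×2 block (so A = I₂, B = −I₂, C = −(1/(b+1))·I₂, and X = (1/(b+1))·[[b+1, −b], [−b, b+1]]). Then for every real z with (b+1)²(z−1)² ≠ b², the Schur complement satisfies A − z·I₂ − B·(X − z·I₂)⁻¹·C = φ_b(z)·Δ_0 − ψ_b(z)·I₂, where φ_b(z) = b/((b+1)²(z−1)² − b²) and ψ_b(z) = z·((b+1)z − b − 2)/((b+1)z − 1). In other words, the level-1 probabilistic Laplacian is spectrally similar to the level-0 Laplacian with functions φ_b and ψ_b. -/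

import Mathlib

open Matrix

/-- The level-1 probabilistic graph Laplacian of the bubble-diamond graph, boundary
vertices listed first. -/
noncomputable def Delta1 (b : ℕ) : Matrix (Fin 4) (Fin 4) ℝ :=
  (1 / ((b : ℝ) + 1)) •
    !![(b : ℝ) + 1, 0, -((b : ℝ) + 1), 0;
       0, (b : ℝ) + 1, 0, -((b : ℝ) + 1);
       -1, 0, (b : ℝ) + 1, -(b : ℝ);
       0, -1, -(b : ℝ), (b : ℝ) + 1]

/-- The level-0 Laplacian. -/
noncomputable def Delta0 : Matrix (Fin 2) (Fin 2) ℝ := !![1, -1; -1, 1]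

/-- Top-left block of `Δ_{1,b}`: the identity. -/
noncomputable def blockA : Matrix (Fin 2) (Fin 2) ℝ := 1

/-- Top-right block of `Δ_{1,b}`: minus the identity. -/
noncomputable def blockB : Matrix (Fin 2) (Fin 2) ℝ := -1

/-- Bottom-left block of `Δ_{1,b}`. -/
noncomputable def blockC (b : ℕ) : Matrix (Fin 2) (Fin 2) ℝ := -(1 / ((b : ℝ) + 1)) • 1

/-- Bottom-right block of `Δ_{1,b}`. -/
noncomputable def blockX (b : ℕ) : Matrix (Fin 2) (Fin 2) ℝ :=
  (1 / ((b : ℝ) + 1)) • !![(b : ℝ) + 1, -(b : ℝ); -(b : ℝ), (b : ℝ) + 1]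

noncomputable def phib (b : ℕ) (z : ℝ) : ℝ :=
  (b : ℝ) / (((b : ℝ) + 1) ^ 2 * (z - 1) ^ 2 - (b : ℝ) ^ 2)

noncomputable def psib (b : ℕ) (z : ℝ) : ℝ :=
  z * (((b : ℝ) + 1) * z - (b : ℝ) - 2) / (((b : ℝ) + 1) * z - 1)

/-- `Δ_{1,b}` has the block form `[[A, B], [C, X]]` with `A = I₂`, `B = −I₂`,
`C = −(1/(b+1))·I₂` and `X = (1/(b+1))·[[b+1, −b], [−b, b+1]]`, and for every real `z`
with `(b+1)²(z−1)² ≠ b²` the Schur complement satisfies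
`A − z·I₂ − B·(X − z·I₂)⁻¹·C = φ_b(z)·Δ₀ − ψ_b(z)·I₂`: the level-1 probabilistic
Laplacian is spectrally similar to the level-0 Laplacian with functions `φ_b, ψ_b`. -/
theorem schur_complement_spectral_similarity (b : ℕ) (hb : 2 ≤ b) :
    Delta1 b = Matrix.reindex finSumFinEquiv finSumFinEquiv
      (Matrix.fromBlocks blockA blockB (blockC b) (blockX b)) ∧
    ∀ z : ℝ, ((b : ℝ) + 1) ^ 2 * (z - 1) ^ 2 ≠ (b : ℝ) ^ 2 →
      blockA - z • (1 : Matrix (Fin 2) (Fin 2) ℝ) -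
          blockB * (blockX b - z • 1)⁻¹ * blockC b =
        phib b z • Delta0 - psib b z • 1 := by
  have hb1 : (b : ℝ) + 1 ≠ 0 := by positivity
  constructor
  · ext i j
    fin_cases i <;> fin_cases j <;>
      simp [Delta1, blockA, blockB, blockC, blockX, finSumFinEquiv, Fin.addCases, Fin.subNat,
        Fin.castLT, hb1] <;>
      (field_simp; ring)
  · intro z hz
    have hD : ((b : ℝ) + 1) ^ 2 * (z - 1) ^ 2 - (b : ℝ) ^ 2 ≠ 0 := sub_ne_zero.mpr hz
    have hw : ((b : ℝ) + 1) * z - 1 ≠ 0 := by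
      intro h
      apply hD
      linear_combination (((b : ℝ) + 1) * (z - 1) - b) * h
    have hinv : (blockX b - z • (1 : Matrix (Fin 2) (Fin 2) ℝ))⁻¹ =
        (((b : ℝ) + 1) / (((b : ℝ) + 1) ^ 2 * (z - 1) ^ 2 - (b : ℝ) ^ 2)) •
          !![((b : ℝ) + 1) * (1 - z), (b : ℝ); (b : ℝ), ((b : ℝ) + 1) * (1 - z)] := by
      apply Matrix.inv_eq_right_inv
      ext i j
      fin_cases i <;> fin_cases j <;>
        simp [blockX, Matrix.mul_apply, Fin.sum_univ_two] <;> field_simp <;> ring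
    have hd : 1 - z - ((b : ℝ) + 1) * (1 - z) / (((b : ℝ) + 1) ^ 2 * (z - 1) ^ 2 - (b : ℝ) ^ 2)
        = phib b z - psib b z := by
      have hw2 : z * ((b : ℝ) + 1) - 1 ≠ 0 := by rwa [mul_comm]
      unfold phib psib
      field_simp
      ring
    have ho : -((b : ℝ) / (((b : ℝ) + 1) ^ 2 * (z - 1) ^ 2 - (b : ℝ) ^ 2)) = - phib b z := rfl
    have hc : ∀ x D : ℝ, ((b : ℝ) + 1)⁻¹ * (((b : ℝ) + 1) / D * x) = x / D := by
      intro x D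
      field_simp
    rw [hinv]
    ext i j
    fin_cases i <;> fin_cases j <;>
      simp [blockA, blockB, blockC, Delta0, hc, ho, hd]
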